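/- The connection ∇¹ is not a critical point of the Yang–Mills functional (part of Proposition 'prop:nabla-1-not-cp'): assume ν ≠ 0, and let Θ(X,Y) = ∇¹_X∇¹_Y − ∇¹_Y∇¹_X − c·∇¹_Z, Θ(X,Z) = ∇¹_X∇¹_Z − ∇¹_Z∇¹_X, Θ(Y,Z) = ∇¹_Y∇¹_Z − ∇¹_Z∇¹_Y as operators on module functions (equal to −νi·id, 0, −(πi/μ)·id respectively). Then the third Yang–Mills critical-point equation fails for ∇¹: for every module function f, [∇¹_X, −Θ(X,Z)] f + [∇¹_Y, −Θ(Y,Z)] f − c·Θ(X,Y) f = c·ν·i·f, which is nonzero whenever f ≠ 0; hence ∇¹ is not a critical point of the Yang–Mills functional. -/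

import Mathlib

noncomputable section

/-- `e(t) = exp(2πit)`. -/
def e2 (t : ℝ) : ℂ := Complex.exp (2 * Real.pi * Complex.I * t)

/-- Partial derivative in the first variable. -/
def pdX (f : ℝ × ℝ → ℂ) (x y : ℝ) : ℂ := deriv (fun t => f (t, y)) x

/-- Partial derivative in the second variable. -/
def pdY (f : ℝ × ℝ → ℂ) (x y : ℝ) : ℂ := deriv (fun t => f (x, t)) y

/-- A module function: smooth, 1-periodic in the second variable, and supported in
`K × ℝ` for some compact `K ⊆ ℝ`. -/
def IsModuleFn (f : ℝ × ℝ → ℂ) : Prop :=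
  ContDiff ℝ (⊤ : ℕ∞) f ∧ (∀ x y : ℝ, f (x, y + 1) = f (x, y)) ∧
    ∃ K : Set ℝ, IsCompact K ∧ ∀ x y : ℝ, x ∉ K → f (x, y) = 0

/-- `(∇⁰_X f)(x,y) = −∂f/∂y(x,y) + (πci/(2μ))·x²·f(x,y)`. -/
def n0X (c : ℕ) (μ : ℝ) (f : ℝ × ℝ → ℂ) : ℝ × ℝ → ℂ := fun q =>
  -pdY f q.1 q.2 + (Real.pi : ℂ) * (c : ℂ) * Complex.I / (2 * (μ : ℂ)) * (q.1 : ℂ) ^ 2 * f q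

/-- `(∇⁰_Y f)(x,y) = −∂f/∂x(x,y)`. -/
def n0Y (f : ℝ × ℝ → ℂ) : ℝ × ℝ → ℂ := fun q => -pdX f q.1 q.2

/-- `(∇⁰_Z f)(x,y) = (πix/μ)·f(x,y)`. -/
def n0Z (μ : ℝ) (f : ℝ × ℝ → ℂ) : ℝ × ℝ → ℂ := fun q =>
  (Real.pi : ℂ) * Complex.I * (q.1 : ℂ) / (μ : ℂ) * f q

/-- A smooth algebra element of `D^c_{μν}`, presented as a `ℤ`-indexed family of smooth
functions on `ℝ × ℝ`: smooth, 1-periodic in `y`, finitely supported in the `ℤ`-variable,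
and `ρ`-invariant. -/
def IsAlgElem (c : ℕ) (ν : ℝ) (Φ : ℤ → ℝ × ℝ → ℂ) : Prop :=
  (∀ p : ℤ, ContDiff ℝ (⊤ : ℕ∞) (Φ p)) ∧
  (∀ (p : ℤ) (x y : ℝ), Φ p (x, y + 1) = Φ p (x, y)) ∧
  {p : ℤ | Φ p ≠ 0}.Finite ∧
  ∀ (p k : ℤ) (x y : ℝ),
    e2 (-((c : ℝ) * (k : ℝ) * (p : ℝ) * (y - (p : ℝ) * ν))) * Φ p (x + (k : ℝ), y) = Φ p (x, y)

/-- The right action of `Φ ∈ D^c_{μν}` on the module function `f`: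
`(f·Φ)(x,y) = Σ_q f(x+2qμ, y+2qν)·conj(Φ(x+2qμ, y+2qν, q))`. -/
def rAct (μ ν : ℝ) (f : ℝ × ℝ → ℂ) (Φ : ℤ → ℝ × ℝ → ℂ) : ℝ × ℝ → ℂ := fun q =>
  ∑ᶠ p : ℤ, f (q.1 + 2 * (p : ℝ) * μ, q.2 + 2 * (p : ℝ) * ν) *
    (starRingEnd ℂ) (Φ p (q.1 + 2 * (p : ℝ) * μ, q.2 + 2 * (p : ℝ) * ν))

/-- `(δ_X Φ)(x,y,p) = 2πicp(x−pμ)·Φ(x,y,p) − ∂Φ/∂y(x,y,p)`. -/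
def dAlgX (c : ℕ) (μ : ℝ) (Φ : ℤ → ℝ × ℝ → ℂ) : ℤ → ℝ × ℝ → ℂ := fun p q =>
  2 * (Real.pi : ℂ) * Complex.I * (c : ℂ) * (p : ℂ) * ((q.1 : ℂ) - (p : ℂ) * (μ : ℂ)) * Φ p q
    - pdY (Φ p) q.1 q.2

/-- `(δ_Y Φ)(x,y,p) = −∂Φ/∂x(x,y,p)`. -/
def dAlgY (Φ : ℤ → ℝ × ℝ → ℂ) : ℤ → ℝ × ℝ → ℂ := fun p q => -pdX (Φ p) q.1 q.2

/-- `(δ_Z Φ)(x,y,p) = 2πip·Φ(x,y,p)`. -/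
def dAlgZ (Φ : ℤ → ℝ × ℝ → ℂ) : ℤ → ℝ × ℝ → ℂ := fun p q =>
  2 * (Real.pi : ℂ) * Complex.I * (p : ℂ) * Φ p q

/-- The `D^c_{μν}`-valued inner product
`⟨f,g⟩(x,y,p) = Σ_k e(−ckp(y−pν))·f(x+k,y)·conj(g(x−2pμ+k, y−2pν))`. -/
def ipD (c : ℕ) (μ ν : ℝ) (f g : ℝ × ℝ → ℂ) : ℤ → ℝ × ℝ → ℂ := fun p q =>
  ∑ᶠ k : ℤ, e2 (-((c : ℝ) * (k : ℝ) * (p : ℝ) * (q.2 - (p : ℝ) * ν))) *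
    f (q.1 + (k : ℝ), q.2) *
    (starRingEnd ℂ) (g (q.1 - 2 * (p : ℝ) * μ + (k : ℝ), q.2 - 2 * (p : ℝ) * ν))


/-- `(∇¹_X f)(x,y) = −∂f/∂y(x,y) + (πci/(2μ)·x² − νix + μiy)·f(x,y)`. -/
def n1X (c : ℕ) (μ ν : ℝ) (f : ℝ × ℝ → ℂ) : ℝ × ℝ → ℂ := fun q =>
  -pdY f q.1 q.2 +
    ((Real.pi : ℂ) * (c : ℂ) * Complex.I / (2 * (μ : ℂ)) * (q.1 : ℂ) ^ 2
      - (ν : ℂ) * Complex.I * (q.1 : ℂ) + (μ : ℂ) * Complex.I * (q.2 : ℂ)) * f q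

/-- The curvature operator `Θ(X,Y) = ∇¹_X∇¹_Y − ∇¹_Y∇¹_X − c·∇¹_Z` of `∇¹`
(here `∇¹_Y = ∇⁰_Y`, `∇¹_Z = ∇⁰_Z`). -/
def th1XY (c : ℕ) (μ ν : ℝ) (f : ℝ × ℝ → ℂ) : ℝ × ℝ → ℂ := fun q =>
  n1X c μ ν (n0Y f) q - n0Y (n1X c μ ν f) q - (c : ℂ) * n0Z μ f q

/-- The curvature operator `Θ(X,Z) = ∇¹_X∇¹_Z − ∇¹_Z∇¹_X` of `∇¹`. -/
def th1XZ (c : ℕ) (μ ν : ℝ) (f : ℝ × ℝ → ℂ) : ℝ × ℝ → ℂ := fun q =>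
  n1X c μ ν (n0Z μ f) q - n0Z μ (n1X c μ ν f) q

/-- The curvature operator `Θ(Y,Z) = ∇¹_Y∇¹_Z − ∇¹_Z∇¹_Y` of `∇¹`. -/
def th1YZ (μ : ℝ) (f : ℝ × ℝ → ℂ) : ℝ × ℝ → ℂ := fun q =>
  n0Y (n0Z μ f) q - n0Z μ (n0Y f) q

/-!
Each curvature operator of `∇¹` is a scalar: `∇¹_X`, `∇¹_Y`, `∇¹_Z` are `-∂_y`, `-∂_x`, `0` plus
multiplication operators, so the second-order terms cancel by symmetry of mixed partials and only
the derivatives of the multipliers survive. Scalars commute with the connection, hence both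
commutators in the third Yang–Mills equation vanish and `-c·Θ(X,Y) = cνi` is all that is left.
-/

theorem differentiable_fderiv_apply {𝕜 E F : Type*} [NontriviallyNormedField 𝕜]
    [NormedAddCommGroup E] [NormedSpace 𝕜 E] [NormedAddCommGroup F] [NormedSpace 𝕜 F]
    {g : E → F} (hg : ContDiff 𝕜 2 g) (v : E) : Differentiable 𝕜 fun q => fderiv 𝕜 g q v :=
  ((hg.fderiv_right (m := 1) one_add_one_eq_two.le).clm_apply contDiff_const).differentiable
    one_ne_zero

section PartialDerivatives

variable {g : ℝ × ℝ → ℂ} {x y : ℝ}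

theorem hasDerivAt_fst_fderiv (hg : DifferentiableAt ℝ g (x, y)) :
    HasDerivAt (fun t => g (t, y)) (fderiv ℝ g (x, y) (1, 0)) x :=
  hg.hasFDerivAt.comp_hasDerivAt x ((hasDerivAt_id x).prodMk (hasDerivAt_const x y))

theorem hasDerivAt_snd_fderiv (hg : DifferentiableAt ℝ g (x, y)) :
    HasDerivAt (fun t => g (x, t)) (fderiv ℝ g (x, y) (0, 1)) y :=
  hg.hasFDerivAt.comp_hasDerivAt y ((hasDerivAt_const y x).prodMk (hasDerivAt_id y))

theorem pdX_eq_fderiv (hg : DifferentiableAt ℝ g (x, y)) :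
    pdX g x y = fderiv ℝ g (x, y) (1, 0) :=
  (hasDerivAt_fst_fderiv hg).deriv

theorem pdY_eq_fderiv (hg : DifferentiableAt ℝ g (x, y)) :
    pdY g x y = fderiv ℝ g (x, y) (0, 1) :=
  (hasDerivAt_snd_fderiv hg).deriv

theorem hasDerivAt_pdX (hg : DifferentiableAt ℝ g (x, y)) :
    HasDerivAt (fun t => g (t, y)) (pdX g x y) x :=
  (hasDerivAt_fst_fderiv hg).differentiableAt.hasDerivAt

theorem uncurry_pdX_eq_fderiv (hg : Differentiable ℝ g) :
    (fun q : ℝ × ℝ => pdX g q.1 q.2) = fun q => fderiv ℝ g q (1, 0) :=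
  funext fun q => pdX_eq_fderiv (hg q)

theorem uncurry_pdY_eq_fderiv (hg : Differentiable ℝ g) :
    (fun q : ℝ × ℝ => pdY g q.1 q.2) = fun q => fderiv ℝ g q (0, 1) :=
  funext fun q => pdY_eq_fderiv (hg q)

theorem differentiable_pdX (hg : ContDiff ℝ 2 g) :
    Differentiable ℝ fun q : ℝ × ℝ => pdX g q.1 q.2 := by
  rw [uncurry_pdX_eq_fderiv (hg.differentiable two_ne_zero)]
  exact differentiable_fderiv_apply hg _

theorem differentiable_pdY (hg : ContDiff ℝ 2 g) :
    Differentiable ℝ fun q : ℝ × ℝ => pdY g q.1 q.2 := by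
  rw [uncurry_pdY_eq_fderiv (hg.differentiable two_ne_zero)]
  exact differentiable_fderiv_apply hg _

theorem pdX_pdY_comm (hg : ContDiff ℝ 2 g) (x y : ℝ) :
    pdX (fun q => pdY g q.1 q.2) x y = pdY (fun q => pdX g q.1 q.2) x y := by
  have hdiff : Differentiable ℝ g := hg.differentiable two_ne_zero
  have hfderiv : DifferentiableAt ℝ (fderiv ℝ g) (x, y) :=
    (hg.fderiv_right (m := 1) one_add_one_eq_two.le).differentiable one_ne_zero _
  have fderiv_apply (v w : ℝ × ℝ) :
      fderiv ℝ (fun q => fderiv ℝ g q v) (x, y) w = fderiv ℝ (fderiv ℝ g) (x, y) w v := by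
    simp [fderiv_clm_apply hfderiv (differentiableAt_const v)]
  have hsymm : IsSymmSndFDerivAt ℝ g (x, y) :=
    hg.contDiffAt.isSymmSndFDerivAt (by simp)
  rw [pdX_eq_fderiv (differentiable_pdY hg _), pdY_eq_fderiv (differentiable_pdX hg _),
    uncurry_pdX_eq_fderiv hdiff, uncurry_pdY_eq_fderiv hdiff, fderiv_apply, fderiv_apply,
    hsymm.eq]

end PartialDerivatives

section Connection

variable {g : ℝ × ℝ → ℂ}

theorem n0Y_const_smul (a : ℂ) (g : ℝ × ℝ → ℂ) : n0Y (a • g) = a • n0Y g := by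
  ext q
  simp [n0Y, pdX]

theorem n1X_zero (c : ℕ) (μ ν : ℝ) : n1X c μ ν 0 = 0 := by
  ext q
  simp [n1X, pdY]

theorem n1X_neg (c : ℕ) (μ ν : ℝ) (g : ℝ × ℝ → ℂ) : n1X c μ ν (-g) = -n1X c μ ν g := by
  ext q
  simp only [n1X, pdY, Pi.neg_apply, deriv.fun_neg]
  ring

theorem differentiable_n0Y (hg : ContDiff ℝ 2 g) : Differentiable ℝ (n0Y g) :=
  (differentiable_pdX hg).neg

theorem pdY_n0Z (μ : ℝ) (g : ℝ × ℝ → ℂ) (x y : ℝ) :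
    pdY (n0Z μ g) x y = Real.pi * Complex.I * x / μ * pdY g x y := by
  simp only [pdY, n0Z, deriv_const_mul_field]

theorem pdX_n0Z (μ : ℝ) {x y : ℝ} (hg : DifferentiableAt ℝ g (x, y)) :
    pdX (n0Z μ g) x y
      = Real.pi * Complex.I / μ * g (x, y) + Real.pi * Complex.I * x / μ * pdX g x y := by
  have hmultiplier : HasDerivAt (fun t : ℝ => (Real.pi * Complex.I * t / μ : ℂ))
      (Real.pi * Complex.I / μ) x := by
    simpa using
      ((hasDerivAt_id x).ofReal_comp.const_mul (Real.pi * Complex.I : ℂ)).div_const (μ : ℂ)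
  exact (hmultiplier.mul (hasDerivAt_pdX hg)).deriv

theorem pdX_n1X (c : ℕ) (μ ν : ℝ) (hg : ContDiff ℝ 2 g) (x y : ℝ) :
    pdX (n1X c μ ν g) x y
      = n1X c μ ν (fun q => pdX g q.1 q.2) (x, y)
        + (Real.pi * c * Complex.I / μ * x - ν * Complex.I) * g (x, y) := by
  have hid : HasDerivAt (fun t : ℝ => (t : ℂ)) 1 x := (hasDerivAt_id x).ofReal_comp
  have hmultiplier : HasDerivAt
      (fun t : ℝ => (Real.pi * c * Complex.I / (2 * μ) * (t : ℂ) ^ 2 - ν * Complex.I * t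
        + μ * Complex.I * y : ℂ))
      (Real.pi * c * Complex.I / μ * x - ν * Complex.I) x := by
    refine ((((hid.fun_pow 2).const_mul (Real.pi * c * Complex.I / (2 * μ) : ℂ)).sub
      (hid.const_mul (ν * Complex.I : ℂ))).add_const (μ * Complex.I * y : ℂ)).congr_deriv ?_
    push_cast
    ring
  have hproduct := hmultiplier.mul (hasDerivAt_pdX (hg.differentiable two_ne_zero (x, y)))
  have hpdY := hasDerivAt_pdX (differentiable_pdY hg (x, y))
  calc pdX (n1X c μ ν g) x y
      = -pdX (fun q => pdY g q.1 q.2) x y + _ := (hpdY.neg.add hproduct).deriv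
    _ = _ := by
      rw [pdX_pdY_comm hg, n1X]
      ring

end Connection

section Curvature

variable {g : ℝ × ℝ → ℂ}

theorem th1XZ_eq_zero (c : ℕ) (μ ν : ℝ) (g : ℝ × ℝ → ℂ) : th1XZ c μ ν g = 0 := by
  ext q
  simp only [th1XZ, n1X, pdY_n0Z, n0Z, Pi.zero_apply]
  ring

theorem th1YZ_eq_smul (μ : ℝ) (hg : Differentiable ℝ g) :
    th1YZ μ g = (-(Real.pi * Complex.I / μ) : ℂ) • g := by
  ext q
  simp only [th1YZ, n0Y, pdX_n0Z μ (hg (q.1, q.2)), n0Z, Pi.smul_apply, smul_eq_mul]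
  ring

theorem th1XY_eq_smul (c : ℕ) (μ ν : ℝ) (hg : ContDiff ℝ 2 g) :
    th1XY c μ ν g = (-(ν * Complex.I) : ℂ) • g := by
  ext q
  have hneg : n0Y g = -fun q => pdX g q.1 q.2 := rfl
  simp only [th1XY, hneg, n1X_neg, Pi.neg_apply, n0Y, pdX_n1X c μ ν hg, n0Z, Pi.smul_apply,
    smul_eq_mul]
  ring

theorem commutator_n1X_neg_th1XZ (c : ℕ) (μ ν : ℝ) (g : ℝ × ℝ → ℂ) :
    n1X c μ ν (-th1XZ c μ ν g) - -th1XZ c μ ν (n1X c μ ν g) = 0 := by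
  simp only [th1XZ_eq_zero, neg_zero, n1X_zero, sub_self]

theorem commutator_n0Y_neg_th1YZ (μ : ℝ) (hg : ContDiff ℝ 2 g) :
    n0Y (-th1YZ μ g) - -th1YZ μ (n0Y g) = 0 := by
  rw [th1YZ_eq_smul μ (hg.differentiable two_ne_zero), th1YZ_eq_smul μ (differentiable_n0Y hg),
    ← neg_smul, ← neg_smul, n0Y_const_smul, sub_self]

end Curvature

theorem statement13_general (c : ℕ) (hc : 0 < c) (μ ν : ℝ) (hμ : μ ≠ 0) (hν : ν ≠ 0)
    (f : ℝ × ℝ → ℂ) (hf : ContDiff ℝ 2 f) :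
    (∀ q : ℝ × ℝ,
      (n1X c μ ν (-th1XZ c μ ν f) q - (-th1XZ c μ ν (n1X c μ ν f)) q) +
        (n0Y (-th1YZ μ f) q - (-th1YZ μ (n0Y f)) q) -
          (c : ℂ) * th1XY c μ ν f q
        = (c : ℂ) * (ν : ℂ) * Complex.I * f q) ∧
    (f ≠ 0 → (fun q : ℝ × ℝ => (c : ℂ) * (ν : ℂ) * Complex.I * f q) ≠ (0 : ℝ × ℝ → ℂ)) := by
  refine ⟨fun q => ?_, fun hf_ne => ?_⟩
  · rw [← Pi.sub_apply, ← Pi.sub_apply, commutator_n1X_neg_th1XZ, commutator_n0Y_neg_th1YZ μ hf,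
      th1XY_eq_smul c μ ν hf]
    simp only [Pi.zero_apply, Pi.smul_apply, smul_eq_mul]
    ring
  · have hscalar : (c * ν * Complex.I : ℂ) ≠ 0 := by simp [hc.ne', hν]
    exact smul_ne_zero hscalar hf_ne

/-- part of Proposition `prop:nabla-1-not-cp`: for `ν ≠ 0`, the third
Yang–Mills critical-point equation fails for `∇¹`: for every module function `f`,
`[∇¹_X, −Θ(X,Z)]f + [∇¹_Y, −Θ(Y,Z)]f − c·Θ(X,Y)f = c·ν·i·f`, which is nonzero whenever
`f ≠ 0`; hence `∇¹` is not a critical point of the Yang–Mills functional. -/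
theorem statement13 (c : ℕ) (hc : 0 < c) (μ ν : ℝ) (hμ : μ ≠ 0) (hν : ν ≠ 0)
    (f : ℝ × ℝ → ℂ) (hf : IsModuleFn f) :
    (∀ q : ℝ × ℝ,
      (n1X c μ ν (-th1XZ c μ ν f) q - (-th1XZ c μ ν (n1X c μ ν f)) q) +
        (n0Y (-th1YZ μ f) q - (-th1YZ μ (n0Y f)) q) -
          (c : ℂ) * th1XY c μ ν f q
        = (c : ℂ) * (ν : ℂ) * Complex.I * f q) ∧
    (f ≠ 0 → (fun q : ℝ × ℝ => (c : ℂ) * (ν : ℂ) * Complex.I * f q) ≠ (0 : ℝ × ℝ → ℂ)) :=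
  statement13_general c hc μ ν hμ hν f (hf.1.of_le (WithTop.coe_le_coe.2 le_top))

end
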